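/- arXiv:2203.08375 — 2 statements merged into one kernel-verified Lean document; each statement's English description precedes it below -/
import Mathlib

section
/- Let ψ∈C²(Ω) be Lipschitz continuous on Ω̄ with 0≤ψ≤Q, Δψ=f(ψ) in Ω, ψ=0 on Γ₀, ψ=Q on Γ₁, and ∂_{x₂}ψ≥0 in Ω. Then 0<ψ(x)<Q and ∂_{x₂}ψ(x)>0 for every x∈Ω. -/
open Real Set MeasureTheory

noncomputable section

/-- Partial derivative in the `x₁` direction. -/
def pd1 (φ : ℝ × ℝ → ℝ) (x : ℝ × ℝ) : ℝ := fderiv ℝ φ x (1, 0)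

/-- Partial derivative in the `x₂` direction. -/
def pd2 (φ : ℝ × ℝ → ℝ) (x : ℝ × ℝ) : ℝ := fderiv ℝ φ x (0, 1)

/-- The Laplacian `Δφ = ∂²φ/∂x₁² + ∂²φ/∂x₂²`. -/
def lap (φ : ℝ × ℝ → ℝ) (x : ℝ × ℝ) : ℝ := pd1 (pd1 φ) x + pd2 (pd2 φ) x

theorem second_deriv_nonneg_of_isLocalMin {g g' : ℝ → ℝ} {a c : ℝ}
    (hmin : IsLocalMin g a) (hg : ∀ᶠ s in nhds a, HasDerivAt g (g' s) s)
    (hg' : HasDerivAt g' c a) : 0 ≤ c := by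
  by_contra! hc
  have hEq : deriv g =ᶠ[nhds a] g' := hg.mono fun s hs => hs.deriv
  have hdd : deriv (deriv g) a = c := by rw [hEq.deriv_eq, hg'.deriv]
  have hmax : IsLocalMax g a :=
    isLocalMax_of_deriv_deriv_neg (by rw [hdd]; exact hc) hmin.deriv_eq_zero
      hg.self_of_nhds.continuousAt
  have hconst : g =ᶠ[nhds a] fun _ => g a := by
    filter_upwards [hmin, hmax] with s h1 h2 using le_antisymm h2 h1
  have h0 : deriv g =ᶠ[nhds a] fun _ => 0 := by
    filter_upwards [hconst.eventuallyEq_nhds] with s hs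
    rw [hs.deriv_eq, deriv_const]
  rw [h0.deriv_eq, deriv_const] at hdd
  exact hc.ne hdd.symm

theorem hasDerivAt_comp_line {E : Type*} [NormedAddCommGroup E] [NormedSpace ℝ E]
    {φ : E → ℝ} {x e : E} {s : ℝ}
    (h : DifferentiableAt ℝ φ (x + s • e)) :
    HasDerivAt (fun s : ℝ => φ (x + s • e)) (fderiv ℝ φ (x + s • e) e) s := by
  have hl : HasDerivAt (fun s : ℝ => x + s • e) e s := by
    simpa using ((hasDerivAt_id s).smul_const e).const_add x
  exact h.hasFDerivAt.comp_hasDerivAt s hl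

/-- The squared Euclidean distance on `ℝ × ℝ` (whose own norm is the sup norm). -/
def sqDist (x y : ℝ × ℝ) : ℝ := (x.1 - y.1) ^ 2 + (x.2 - y.2) ^ 2

theorem continuous_sqDist (y : ℝ × ℝ) : Continuous fun x => sqDist x y := by
  unfold sqDist; fun_prop

theorem abs_sub_le_of_sqDist_le {x y : ℝ × ℝ} {R : ℝ} (hR : 0 ≤ R) (h : sqDist x y ≤ R ^ 2) :
    |x.1 - y.1| ≤ R ∧ |x.2 - y.2| ≤ R := by
  unfold sqDist at h
  constructor
  · exact abs_le_of_sq_le_sq (by nlinarith [sq_nonneg (x.2 - y.2)]) hR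
  · exact abs_le_of_sq_le_sq (by nlinarith [sq_nonneg (x.1 - y.1)]) hR

theorem isCompact_annulus (y : ℝ × ℝ) (r : ℝ) {R : ℝ} (hR : 0 ≤ R) :
    IsCompact {x : ℝ × ℝ | r ^ 2 ≤ sqDist x y ∧ sqDist x y ≤ R ^ 2} := by
  refine (isCompact_closedBall y R).of_isClosed_subset ?_ ?_
  · exact (isClosed_le continuous_const (continuous_sqDist y)).inter
      (isClosed_le (continuous_sqDist y) continuous_const)
  · intro x hx
    obtain ⟨h1, h2⟩ := abs_sub_le_of_sqDist_le hR hx.2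
    simp only [Metric.mem_closedBall, Prod.dist_eq, Real.dist_eq]
    exact max_le h1 h2

/-- Derivative of the Hopf barrier `exp (-A |x - y|²) - B` along a coordinate line, on which
`|x - y|² = c + (d + s)²`. -/
theorem hasDerivAt_exp_neg_sq (A B c d s : ℝ) :
    HasDerivAt (fun s : ℝ => rexp (-(A * (c + (d + s) ^ 2))) - B)
      (-(2 * A * (d + s)) * rexp (-(A * (c + (d + s) ^ 2)))) s := by
  have h : HasDerivAt (fun s : ℝ => -(A * (c + (d + s) ^ 2))) (-(2 * A * (d + s))) s := by
    have := (((((hasDerivAt_id s).const_add d).pow 2).const_add c).const_mul A).neg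
    refine this.congr_deriv ?_
    simp; ring
  exact (h.exp.sub_const B).congr_deriv (by ring)

theorem hasDerivAt_deriv_exp_neg_sq (A c d s : ℝ) :
    HasDerivAt (fun s : ℝ => -(2 * A * (d + s)) * rexp (-(A * (c + (d + s) ^ 2))))
      ((4 * A ^ 2 * (d + s) ^ 2 - 2 * A) * rexp (-(A * (c + (d + s) ^ 2)))) s := by
  have h := hasDerivAt_exp_neg_sq A 0 c d s
  simp only [sub_zero] at h
  have hl : HasDerivAt (fun s : ℝ => -(2 * A * (d + s))) (-(2 * A)) s := by
    refine (((hasDerivAt_id s).const_add d).const_mul (2 * A)).neg.congr_deriv ?_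
    simp
  exact (hl.mul h).congr_deriv (by ring)

/-- A directional second-derivative test for `ψ(· + p) - ψ - ε v`. -/
theorem second_deriv_test_shift {Ω : Set (ℝ × ℝ)} (hΩ : IsOpen Ω) {ψ v : ℝ × ℝ → ℝ}
    (hC2 : ContDiffOn ℝ 2 ψ Ω) {x p e : ℝ × ℝ} (hx : x ∈ Ω) (hxp : x + p ∈ Ω) {ε c : ℝ}
    {v' : ℝ → ℝ} (hv : ∀ s, HasDerivAt (fun s : ℝ => v (x + s • e)) (v' s) s)
    (hv' : HasDerivAt v' c 0)
    (hmin : IsLocalMin (fun z => ψ (z + p) - ψ z - ε * v z) x) :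
    0 ≤ fderiv ℝ (fun z => fderiv ℝ ψ z e) (x + p) e
      - fderiv ℝ (fun z => fderiv ℝ ψ z e) x e - ε * c := by
  have hdiff : ∀ z ∈ Ω, DifferentiableAt ℝ ψ z := fun z hz =>
    (hC2.contDiffAt (hΩ.mem_nhds hz)).differentiableAt (by norm_num)
  have hdiff' : ∀ z ∈ Ω, DifferentiableAt ℝ (fun z => fderiv ℝ ψ z e) z := fun z hz =>
    ((((hC2.contDiffAt (hΩ.mem_nhds hz)).fderiv_right (m := 1) (by norm_num)).differentiableAt
      (by norm_num)).clm_apply (differentiableAt_const e))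
  have hline : Continuous fun s : ℝ => x + s • e := by fun_prop
  have hline' : Continuous fun s : ℝ => x + p + s • e := by fun_prop
  have hev : ∀ᶠ s : ℝ in nhds 0, x + s • e ∈ Ω :=
    hline.continuousAt.eventually_mem (hΩ.mem_nhds (by simpa using hx))
  have hev' : ∀ᶠ s : ℝ in nhds 0, x + p + s • e ∈ Ω :=
    hline'.continuousAt.eventually_mem (hΩ.mem_nhds (by simpa using hxp))
  refine second_deriv_nonneg_of_isLocalMin (a := 0)
    (g := fun s : ℝ => ψ (x + p + s • e) - ψ (x + s • e) - ε * v (x + s • e))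
    (g' := fun s : ℝ => fderiv ℝ ψ (x + p + s • e) e - fderiv ℝ ψ (x + s • e) e - ε * v' s)
    ?_ ?_ ?_
  · have h0 : x + (0 : ℝ) • e = x := by simp
    have := IsMinFilter.comp_tendsto (g := fun s : ℝ => x + s • e) (l' := nhds (0 : ℝ))
      (b := 0) (f := fun z => ψ (z + p) - ψ z - ε * v z) (l := nhds x)
      (by rw [h0]; exact hmin)
      (by simpa using hline.tendsto 0)
    have hcomp : (fun s : ℝ => ψ (x + p + s • e) - ψ (x + s • e) - ε * v (x + s • e))
        = (fun z => ψ (z + p) - ψ z - ε * v z) ∘ fun s : ℝ => x + s • e := by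
      funext s
      simp only [Function.comp, add_right_comm x p]
    rw [hcomp]
    exact this
  · filter_upwards [hev, hev'] with s hs hs'
    exact ((hasDerivAt_comp_line (hdiff _ hs')).sub (hasDerivAt_comp_line (hdiff _ hs))).sub
      ((hv s).const_mul ε)
  · have h1 := hasDerivAt_comp_line (φ := fun z => fderiv ℝ ψ z e) (x := x) (e := e) (s := 0)
      (hdiff' _ (by simpa using hx))
    have h2 := hasDerivAt_comp_line (φ := fun z => fderiv ℝ ψ z e) (x := x + p) (e := e) (s := 0)
      (hdiff' _ (by simpa using hxp))
    refine ((h2.sub h1).sub (hv'.const_mul ε)).congr_deriv ?_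
    simp

/-- Comparison on an annulus: a nonnegative increment `ψ(· + p) - ψ` with nonpositive Laplacian
dominates the Hopf barrier. -/
theorem increment_ge_barrier {Ω : Set (ℝ × ℝ)} (hΩ : IsOpen Ω) {ψ : ℝ × ℝ → ℝ}
    (hC2 : ContDiffOn ℝ 2 ψ Ω) {y p : ℝ × ℝ} {r R ε : ℝ} (hr : 0 < r) (hR : 0 < R) (hε : 0 < ε)
    (hsub : ∀ x, sqDist x y ≤ R ^ 2 → x ∈ Ω ∧ x + p ∈ Ω)
    (hlap : ∀ x, sqDist x y ≤ R ^ 2 → lap ψ (x + p) ≤ lap ψ x)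
    (hnn : ∀ x, sqDist x y ≤ R ^ 2 → ψ x ≤ ψ (x + p))
    (hin : ∀ x, sqDist x y = r ^ 2 → ε ≤ ψ (x + p) - ψ x)
    {z : ℝ × ℝ} (hz : r ^ 2 ≤ sqDist z y) (hz' : sqDist z y ≤ R ^ 2) :
    ε * (rexp (-((r ^ 2)⁻¹ * sqDist z y)) - rexp (-((r ^ 2)⁻¹ * R ^ 2)))
      ≤ ψ (z + p) - ψ z := by
  set A : ℝ := (r ^ 2)⁻¹ with hA
  have hApos : 0 < A := by positivity
  set v : ℝ × ℝ → ℝ := fun x => rexp (-(A * sqDist x y)) - rexp (-(A * R ^ 2)) with hv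
  set K : Set (ℝ × ℝ) := {x | r ^ 2 ≤ sqDist x y ∧ sqDist x y ≤ R ^ 2} with hK
  have hqc := continuous_sqDist y
  have hcont : ContinuousOn (fun x => ψ (x + p) - ψ x - ε * v x) K := by
    have h1 : ContinuousOn (fun x => ψ (x + p)) K :=
      hC2.continuousOn.comp (by fun_prop) fun x hx => (hsub x hx.2).2
    have h2 : ContinuousOn ψ K := hC2.continuousOn.mono fun x hx => (hsub x hx.2).1
    have h3 : Continuous v := by rw [hv]; fun_prop
    exact (h1.sub h2).sub (h3.continuousOn.const_smul ε)
  obtain ⟨x, hxK, hxmin⟩ := (isCompact_annulus y r hR.le).exists_isMinOn ⟨z, hz, hz'⟩ hcont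
  have hzx := hxmin (show z ∈ K from ⟨hz, hz'⟩)
  simp only [mem_ofPred_eq] at hzx
  suffices h : 0 ≤ ψ (x + p) - ψ x - ε * v x by
    have := h.trans hzx
    simp only [hv] at this
    linarith
  by_contra! hneg
  have hxR : sqDist x y < R ^ 2 := by
    refine lt_of_le_of_ne hxK.2 fun h => ?_
    have hvx : v x = 0 := by simp [hv, h]
    have := hnn x hxK.2
    rw [hvx] at hneg
    linarith
  have hxr : r ^ 2 < sqDist x y := by
    refine lt_of_le_of_ne hxK.1 fun h => ?_
    have hvx : v x ≤ 1 := by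
      have h1 : rexp (-(A * sqDist x y)) ≤ 1 := by
        rw [Real.exp_le_one_iff, ← h]; simp only [Left.neg_nonpos_iff]; positivity
      have h2 := Real.exp_pos (-(A * R ^ 2))
      simp only [hv]; linarith
    have := hin x h.symm
    nlinarith
  have hKn : K ∈ nhds x := by
    filter_upwards [(isOpen_lt continuous_const hqc).mem_nhds hxr,
      (isOpen_lt hqc continuous_const).mem_nhds hxR] with w h1 h2
    exact ⟨le_of_lt h1, le_of_lt h2⟩
  have hloc : IsLocalMin (fun x => ψ (x + p) - ψ x - ε * v x) x := hxmin.isLocalMin hKn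
  obtain ⟨hxΩ, hxpΩ⟩ := hsub x hxK.2
  have t1 := second_deriv_test_shift hΩ hC2 hxΩ hxpΩ (e := (1, 0))
    (fun s => by
      have := hasDerivAt_exp_neg_sq A (rexp (-(A * R ^ 2))) ((x.2 - y.2) ^ 2) (x.1 - y.1) s
      convert this using 1
      funext s
      simp only [hv, sqDist, Prod.fst_add, Prod.snd_add, Prod.smul_fst, Prod.smul_snd, smul_eq_mul]
      ring_nf) (hasDerivAt_deriv_exp_neg_sq A _ _ 0) hloc
  have t2 := second_deriv_test_shift hΩ hC2 hxΩ hxpΩ (e := (0, 1))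
    (fun s => by
      have := hasDerivAt_exp_neg_sq A (rexp (-(A * R ^ 2))) ((x.1 - y.1) ^ 2) (x.2 - y.2) s
      convert this using 1
      funext s
      simp only [hv, sqDist, Prod.fst_add, Prod.snd_add, Prod.smul_fst, Prod.smul_snd, smul_eq_mul]
      ring_nf) (hasDerivAt_deriv_exp_neg_sq A _ _ 0) hloc
  have hl := hlap x hxK.2
  unfold lap pd1 pd2 at hl
  have e1 : (x.2 - y.2) ^ 2 + (x.1 - y.1 + 0) ^ 2 = sqDist x y := by unfold sqDist; ring
  have e2 : (x.1 - y.1) ^ 2 + (x.2 - y.2 + 0) ^ 2 = sqDist x y := by unfold sqDist; ring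
  rw [e1] at t1
  rw [e2] at t2
  have hAq : 1 < A * sqDist x y := by
    rw [hA, inv_mul_eq_div, one_lt_div (by positivity)]; exact hxr
  have hpos : 0 < ε * ((4 * A * (A * sqDist x y - 1)) * rexp (-(A * sqDist x y))) := by
    have : 0 < A * sqDist x y - 1 := by linarith
    positivity
  have hsum : ε * ((4 * A * (A * sqDist x y - 1)) * rexp (-(A * sqDist x y)))
      = ε * ((4 * A ^ 2 * (x.1 - y.1 + 0) ^ 2 - 2 * A) * rexp (-(A * sqDist x y)))
        + ε * ((4 * A ^ 2 * (x.2 - y.2 + 0) ^ 2 - 2 * A) * rexp (-(A * sqDist x y))) := by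
    rw [← mul_add, ← add_mul]
    congr 2
    unfold sqDist
    ring
  linarith

theorem hasDerivAt_vertical {Ω : Set (ℝ × ℝ)} (hΩ : IsOpen Ω) {ψ : ℝ × ℝ → ℝ}
    (hC2 : ContDiffOn ℝ 2 ψ Ω) {x₁ t : ℝ} (h : (x₁, t) ∈ Ω) :
    HasDerivAt (fun t => ψ (x₁, t)) (pd2 ψ (x₁, t)) t := by
  have hd : DifferentiableAt ℝ ψ (x₁, t) :=
    (hC2.contDiffAt (hΩ.mem_nhds h)).differentiableAt (by norm_num)
  have := hasDerivAt_comp_line (φ := ψ) (x := (x₁, 0)) (e := (0, 1)) (s := t)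
    (by simpa using hd)
  simpa [pd2] using this

theorem continuousAt_pd2 {Ω : Set (ℝ × ℝ)} (hΩ : IsOpen Ω) {ψ : ℝ × ℝ → ℝ}
    (hC2 : ContDiffOn ℝ 2 ψ Ω) {x : ℝ × ℝ} (h : x ∈ Ω) : ContinuousAt (pd2 ψ) x :=
  (((hC2.contDiffAt (hΩ.mem_nhds h)).fderiv_right (m := 1) (by norm_num)).continuousAt).clm_apply
    continuousAt_const

/-- The vertical increment is at least `ε h` when `∂_{x₂}ψ ≥ ε` along the segment. -/
theorem mul_le_vertical_increment {Ω : Set (ℝ × ℝ)} (hΩ : IsOpen Ω) {ψ : ℝ × ℝ → ℝ}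
    (hC2 : ContDiffOn ℝ 2 ψ Ω) {x : ℝ × ℝ} {h ε : ℝ} (hh : 0 ≤ h)
    (hseg : ∀ t ∈ Icc 0 h, x + (0, t) ∈ Ω ∧ ε ≤ pd2 ψ (x + (0, t))) :
    ε * h ≤ ψ (x + (0, h)) - ψ x := by
  have hd : ∀ t ∈ Icc 0 h,
      HasDerivAt (fun t => ψ (x + (0, t))) (pd2 ψ (x + (0, t))) t := by
    intro t ht
    have h1 : DifferentiableAt ℝ ψ (x + t • ((0 : ℝ), (1 : ℝ))) := by
      have : x + t • ((0 : ℝ), (1 : ℝ)) = x + (0, t) := by simp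
      rw [this]
      exact (hC2.contDiffAt (hΩ.mem_nhds (hseg t ht).1)).differentiableAt (by norm_num)
    simpa [pd2] using hasDerivAt_comp_line h1
  have := (convex_Icc 0 h).mul_sub_le_image_sub_of_le_deriv (f := fun t => ψ (x + (0, t)))
    (C := ε) (fun t ht => (hd t ht).continuousAt.continuousWithinAt)
    (fun t ht => (hd t (interior_subset ht)).differentiableAt.differentiableWithinAt)
    (fun t ht => by
      rw [(hd t (interior_subset ht)).deriv]; exact (hseg t (interior_subset ht)).2)
    0 ⟨le_rfl, hh⟩ h ⟨hh, le_rfl⟩ hh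
  have h0 : x + ((0 : ℝ), (0 : ℝ)) = x := by
    ext <;> simp
  simpa [h0] using this

/-- Strong minimum principle on discs for the vertical derivative of `ψ`, when the Laplacian of `ψ`
is nonincreasing in the vertical direction. -/
theorem pd2_pos_of_pd2_center_pos {Ω : Set (ℝ × ℝ)} (hΩ : IsOpen Ω) {ψ : ℝ × ℝ → ℝ}
    (hC2 : ContDiffOn ℝ 2 ψ Ω) (hmono : ∀ x ∈ Ω, 0 ≤ pd2 ψ x)
    {y : ℝ × ℝ} {R δ : ℝ} (hR : 0 < R) (hδ : 0 < δ)
    (hsub : ∀ x, sqDist x y ≤ R ^ 2 → ∀ h ∈ Icc 0 δ, x + (0, h) ∈ Ω)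
    (hlap : ∀ x, sqDist x y ≤ R ^ 2 → ∀ h ∈ Icc 0 δ, lap ψ (x + (0, h)) ≤ lap ψ x)
    (hy : 0 < pd2 ψ y) {z : ℝ × ℝ} (hz : sqDist z y < R ^ 2) : 0 < pd2 ψ z := by
  have h00 : ∀ x : ℝ × ℝ, x + ((0 : ℝ), (0 : ℝ)) = x := fun x => by ext <;> simp
  have hsub0 : ∀ x, sqDist x y ≤ R ^ 2 → x ∈ Ω := fun x hx => by
    simpa [h00] using hsub x hx 0 ⟨le_rfl, hδ.le⟩
  have hyΩ : y ∈ Ω := hsub0 y (by simp [sqDist]; positivity)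
  obtain ⟨ρ, hρ, hball⟩ := Metric.eventually_nhds_iff.1
    ((continuousAt_pd2 hΩ hC2 hyΩ).eventually_const_lt (half_lt_self hy))
  set ε : ℝ := pd2 ψ y / 2 with hε
  have hεpos : 0 < ε := by positivity
  set r : ℝ := min (ρ / 3) R with hr
  have hrpos : 0 < r := lt_min (by positivity) hR
  have hrρ : r ≤ ρ / 3 := min_le_left _ _
  have hrR : r ^ 2 ≤ R ^ 2 := pow_le_pow_left₀ hrpos.le (min_le_right _ _) 2
  have hnear : ∀ x, sqDist x y ≤ r ^ 2 → ∀ h ∈ Icc 0 (ρ / 3), ε < pd2 ψ (x + (0, h)) := by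
    intro x hx h hh
    obtain ⟨h1, h2⟩ := abs_sub_le_of_sqDist_le hrpos.le hx
    apply hball
    rw [Prod.dist_eq, Real.dist_eq, Real.dist_eq]
    refine max_lt ?_ ?_
    · simp only [Prod.fst_add, add_zero]; linarith
    · rw [abs_le] at h2
      simp only [Prod.snd_add, abs_lt]
      constructor <;> linarith [hh.1, hh.2, h2.1, h2.2]
  rcases le_total (sqDist z y) (r ^ 2) with hzr | hzr
  · have := hnear z hzr 0 ⟨le_rfl, by positivity⟩
    rw [h00] at this
    linarith
  set m : ℝ := rexp (-((r ^ 2)⁻¹ * sqDist z y)) - rexp (-((r ^ 2)⁻¹ * R ^ 2)) with hm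
  have hmpos : 0 < m := by
    rw [hm, sub_pos, Real.exp_lt_exp, neg_lt_neg_iff]
    exact mul_lt_mul_of_pos_left hz (by positivity)
  have hinc : ∀ h ∈ Ioo 0 (min δ (ρ / 3)), ε * m ≤ h⁻¹ • (ψ (z + (0, h)) - ψ z) := by
    intro h hh
    have hhδ : h ≤ δ := (hh.2.trans_le (min_le_left _ _)).le
    have hhρ : h ≤ ρ / 3 := (hh.2.trans_le (min_le_right _ _)).le
    have key := increment_ge_barrier hΩ hC2 (p := (0, h)) hrpos hR (mul_pos hεpos hh.1)
      (fun x hx => ⟨hsub0 x hx, hsub x hx h ⟨hh.1.le, hhδ⟩⟩)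
      (fun x hx => hlap x hx h ⟨hh.1.le, hhδ⟩)
      (fun x hx => by
        have := mul_le_vertical_increment hΩ hC2 (x := x) (ε := 0) hh.1.le fun t ht =>
          have := hsub x hx t ⟨ht.1, ht.2.trans hhδ⟩
          ⟨this, hmono _ this⟩
        linarith)
      (fun x hx => mul_le_vertical_increment hΩ hC2 hh.1.le fun t ht =>
        ⟨hsub x (hx.le.trans hrR) t ⟨ht.1, ht.2.trans hhδ⟩,
          (hnear x hx.le t ⟨ht.1, ht.2.trans hhρ⟩).le⟩) hzr hz.le
    rw [smul_eq_mul, inv_mul_eq_div, le_div_iff₀ hh.1]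
    rw [← hm] at key
    linarith
  have hder := (hasDerivAt_vertical hΩ hC2 (x₁ := z.1) (t := z.2)
    (hsub0 z hz.le)).tendsto_slope_zero_right
  have hge : ε * m ≤ pd2 ψ (z.1, z.2) := by
    refine ge_of_tendsto hder ?_
    filter_upwards [Ioo_mem_nhdsGT (show (0 : ℝ) < min δ (ρ / 3) by positivity)] with h hh
    have := hinc h hh
    have e : z + (0, h) = (z.1, z.2 + h) := by ext <;> simp
    rwa [e] at this
  exact (mul_pos hεpos hmpos).trans_le hge

theorem antitoneOn_of_cubic_inverse {Q : ℝ} (hQ : 0 < Q) {κ f : ℝ → ℝ}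
    (hκ : ∀ t ∈ Icc (0 : ℝ) 1, κ (Q * (3 * t ^ 2 - 2 * t ^ 3)) = t)
    (hf : ∀ s : ℝ, f s = 6 * Q * (1 - 2 * κ s)) : AntitoneOn f (Icc 0 Q) := by
  have hsurj : ∀ s ∈ Icc 0 Q, ∃ t ∈ Icc (0 : ℝ) 1, Q * (3 * t ^ 2 - 2 * t ^ 3) = s := by
    intro s hs
    have := intermediate_value_Icc (zero_le_one' ℝ)
      (f := fun t : ℝ => Q * (3 * t ^ 2 - 2 * t ^ 3)) (by fun_prop)
    exact this ⟨by simpa using hs.1, by norm_num; exact hs.2⟩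
  intro s hs s' hs' hss
  obtain ⟨t, ht, rfl⟩ := hsurj s hs
  obtain ⟨t', ht', rfl⟩ := hsurj s' hs'
  rw [hf, hf, hκ t ht, hκ t' ht']
  suffices t ≤ t' by nlinarith
  by_contra! hlt
  have h1 := le_of_mul_le_mul_left hss hQ
  have h2 : 0 < (t - t') * (3 * (t + t') - 2 * (t ^ 2 + t * t' + t' ^ 2)) := by
    refine mul_pos (by linarith) ?_
    nlinarith [ht.1, ht.2, ht'.1, ht'.2, mul_nonneg ht.1 (sub_nonneg.2 ht.2),
      mul_nonneg ht'.1 (sub_nonneg.2 ht'.2), mul_nonneg ht.1 (sub_nonneg.2 ht'.2),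
      mul_nonneg ht'.1 (sub_nonneg.2 ht.2)]
  nlinarith

/-- Positivity: a monotone solution of `Δψ = f(ψ)` in the nozzle with `ψ = 0` on `Γ₀`
and `ψ = Q` on `Γ₁` satisfies `0 < ψ < Q` and `∂_{x₂}ψ > 0` in `Ω`. -/
theorem stmt18
    (Q α : ℝ) (hQ : 0 < Q) (hα : α ∈ Set.Ioo (0 : ℝ) 1)
    (κ : ℝ → ℝ) (hκ : ∀ t ∈ Set.Icc (0 : ℝ) 1, κ (Q * (3 * t ^ 2 - 2 * t ^ 3)) = t)
    (f : ℝ → ℝ) (hf : ∀ s : ℝ, f s = 6 * Q * (1 - 2 * κ s))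
    (h₀ h₁ : ℝ → ℝ)
    (hh₀ : ContDiff ℝ 2 h₀) (hh₁ : ContDiff ℝ 2 h₁)
    (hh₀α : ∃ C : ℝ, ∀ x y : ℝ, |deriv (deriv h₀) x - deriv (deriv h₀) y| ≤ C * |x - y| ^ α)
    (hh₁α : ∃ C : ℝ, ∀ x y : ℝ, |deriv (deriv h₁) x - deriv (deriv h₁) y| ≤ C * |x - y| ^ α)
    (hlt : ∀ x₁ : ℝ, h₀ x₁ < h₁ x₁)
    (Lm Lp a b : ℝ) (hLm : Lm < 0) (hLp : 0 < Lp)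
    (ha : 0 ≤ a) (hab : a < b) (hb : b ≤ 1)
    (hup : ∀ x₁ ≤ Lm, h₀ x₁ = 0 ∧ h₁ x₁ = 1)
    (hdown : ∀ x₁ ≥ Lp, h₀ x₁ = a ∧ h₁ x₁ = b)
    (Ω : Set (ℝ × ℝ)) (hΩ : Ω = {x : ℝ × ℝ | h₀ x.1 < x.2 ∧ x.2 < h₁ x.1})
    (ψ : ℝ × ℝ → ℝ)
    (hC2 : ContDiffOn ℝ 2 ψ Ω)
    (hLip : ∃ K, LipschitzOnWith K ψ (closure Ω))
    (hbd : ∀ x ∈ Ω, 0 ≤ ψ x ∧ ψ x ≤ Q)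
    (heq : ∀ x ∈ Ω, lap ψ x = f (ψ x))
    (hΓ₀ : ∀ x₁ : ℝ, ψ (x₁, h₀ x₁) = 0)
    (hΓ₁ : ∀ x₁ : ℝ, ψ (x₁, h₁ x₁) = Q)
    (hmono : ∀ x ∈ Ω, 0 ≤ pd2 ψ x) :
    ∀ x ∈ Ω, (0 < ψ x ∧ ψ x < Q) ∧ 0 < pd2 ψ x := by
  have hΩo : IsOpen Ω := by
    rw [hΩ]
    exact (isOpen_lt (hh₀.continuous.comp continuous_fst) continuous_snd).inter
      (isOpen_lt continuous_snd (hh₁.continuous.comp continuous_fst))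
  have hmem : ∀ x₁ t : ℝ, (x₁, t) ∈ Ω ↔ t ∈ Ioo (h₀ x₁) (h₁ x₁) := fun x₁ t => by
    rw [hΩ]; rfl
  have hfanti := antitoneOn_of_cubic_inverse hQ hκ hf
  have hcont : ∀ x₁ : ℝ, ContinuousOn (fun t => ψ (x₁, t)) (Icc (h₀ x₁) (h₁ x₁)) := by
    intro x₁
    obtain ⟨K, hK⟩ := hLip
    refine hK.continuousOn.comp (by fun_prop) ?_
    rw [← closure_Ioo (hlt x₁).ne]
    exact MapsTo.closure (fun t ht => (hmem x₁ t).2 ht) (by fun_prop)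
  have hder : ∀ x₁ : ℝ, ∀ t ∈ Ioo (h₀ x₁) (h₁ x₁),
      HasDerivAt (fun t => ψ (x₁, t)) (pd2 ψ (x₁, t)) t := fun x₁ t ht =>
    hasDerivAt_vertical hΩo hC2 ((hmem x₁ t).2 ht)
  have hlapmono : ∀ (x : ℝ × ℝ) (δ : ℝ), (∀ h ∈ Icc 0 δ, x + (0, h) ∈ Ω) → ∀ h ∈ Icc 0 δ,
      lap ψ (x + (0, h)) ≤ lap ψ x := by
    intro x δ hx h hh
    have hx0 : x ∈ Ω := by
      have := hx 0 ⟨le_rfl, hh.1.trans hh.2⟩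
      have e : x + ((0 : ℝ), (0 : ℝ)) = x := by ext <;> simp
      rwa [e] at this
    rw [heq _ hx0, heq _ (hx h hh)]
    refine hfanti (hbd _ hx0) (hbd _ (hx h hh)) ?_
    have := mul_le_vertical_increment hΩo hC2 (x := x) (ε := 0) hh.1 fun t ht =>
      have := hx t ⟨ht.1, ht.2.trans hh.2⟩
      ⟨this, hmono _ this⟩
    linarith
  have hpos : ∀ x₁ : ℝ, ∀ t ∈ Ioo (h₀ x₁) (h₁ x₁), 0 < pd2 ψ (x₁, t) := by
    intro x₁
    set u : Set ℝ := {t | t ∈ Ioo (h₀ x₁) (h₁ x₁) ∧ 0 < pd2 ψ (x₁, t)} with hu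
    suffices h : Ioo (h₀ x₁) (h₁ x₁) ⊆ u from fun t ht => (h ht).2
    refine isPreconnected_Ioo.subset_of_closure_inter_subset ?_ ?_ ?_
    · rw [isOpen_iff_mem_nhds]
      rintro t ⟨ht, htpos⟩
      have hc : ContinuousAt (fun t => pd2 ψ (x₁, t)) t :=
        ContinuousAt.comp (g := pd2 ψ) (f := fun t => (x₁, t))
          (continuousAt_pd2 hΩo hC2 ((hmem x₁ t).2 ht)) (by fun_prop)
      filter_upwards [isOpen_Ioo.mem_nhds ht, hc.eventually_const_lt htpos] with s h1 h2
      exact ⟨h1, h2⟩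
    · obtain ⟨c, hc, hslope⟩ := exists_hasDerivAt_eq_slope (fun t => ψ (x₁, t))
        (fun t => pd2 ψ (x₁, t)) (hlt x₁) (hcont x₁) (hder x₁)
      refine ⟨c, hc, hc, ?_⟩
      simp only [hΓ₀, hΓ₁] at hslope
      rw [hslope, sub_zero]
      exact div_pos hQ (sub_pos.2 (hlt x₁))
    · rintro t ⟨htcl, ht⟩
      refine ⟨ht, ?_⟩
      obtain ⟨ρ, hρ, hball⟩ := Metric.isOpen_iff.1 hΩo (x₁, t) ((hmem x₁ t).2 ht)
      obtain ⟨t', ht', hdist⟩ := Metric.mem_closure_iff.1 htcl (ρ / 4) (by positivity)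
      rw [Real.dist_eq, abs_lt] at hdist
      have hsub : ∀ x, sqDist x (x₁, t') ≤ (ρ / 3) ^ 2 → ∀ h ∈ Icc 0 (ρ / 4),
          x + (0, h) ∈ Ω := by
        intro x hx h hh
        obtain ⟨h1, h2⟩ := abs_sub_le_of_sqDist_le (by positivity) hx
        apply hball
        rw [Metric.mem_ball, Prod.dist_eq, Real.dist_eq, Real.dist_eq]
        rw [abs_le] at h2
        refine max_lt ?_ ?_
        · simp only [Prod.fst_add, add_zero]; linarith
        · simp only [Prod.snd_add, abs_lt]
          constructor <;> linarith [hh.1, hh.2, h2.1, h2.2, hdist.1, hdist.2]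
      refine pd2_pos_of_pd2_center_pos hΩo hC2 hmono (y := (x₁, t')) (R := ρ / 3) (δ := ρ / 4)
        (by positivity) (by positivity) hsub
        (fun x hx => hlapmono x _ (hsub x hx)) ht'.2 ?_
      simp only [sqDist, sub_self]
      nlinarith
  rintro ⟨x₁, t⟩ hx
  have ht := (hmem x₁ t).1 hx
  have hstrict : StrictMonoOn (fun t => ψ (x₁, t)) (Icc (h₀ x₁) (h₁ x₁)) := by
    refine strictMonoOn_of_deriv_pos (convex_Icc _ _) (hcont x₁) fun s hs => ?_
    rw [interior_Icc] at hs
    rw [(hder x₁ s hs).deriv]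
    exact hpos x₁ s hs
  have hle := (hlt x₁).le
  refine ⟨⟨?_, ?_⟩, hpos x₁ t ht⟩
  · simpa only [hΓ₀] using hstrict ⟨le_rfl, hle⟩ ⟨ht.1.le, ht.2.le⟩ ht.1
  · simpa only [hΓ₁] using hstrict ⟨ht.1.le, ht.2.le⟩ ⟨hle, le_rfl⟩ ht.2
end
end

section
/- There is at most one function ψ∈C²(Ω), Lipschitz continuous on Ω̄, with 0≤ψ≤Q, satisfying Δψ=f(ψ) in Ω, ψ=0 on Γ₀, ψ=Q on Γ₁, and ∂_{x₂}ψ≥0 in Ω: any two such functions coincide on Ω. -/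
open Real Set MeasureTheory

noncomputable section

/-- `g` is differentiable near `t` and its derivative has derivative `c` at `t`. -/
def HasSecondDerivAt (g : ℝ → ℝ) (c t : ℝ) : Prop :=
  ∃ g' : ℝ → ℝ, (∀ᶠ s in nhds t, HasDerivAt g (g' s) s) ∧ HasDerivAt g' c t

namespace HasSecondDerivAt

lemma sub {g k : ℝ → ℝ} {a b t : ℝ} (hg : HasSecondDerivAt g a t)
    (hk : HasSecondDerivAt k b t) : HasSecondDerivAt (fun s => g s - k s) (a - b) t := by
  obtain ⟨g', hg, hg'⟩ := hg
  obtain ⟨k', hk, hk'⟩ := hk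
  refine ⟨fun s => g' s - k' s, ?_, hg'.sub hk'⟩
  filter_upwards [hg, hk] with s h1 h2 using h1.sub h2

lemma comp_add_const {g : ℝ → ℝ} {a t τ : ℝ} (hg : HasSecondDerivAt g a (t + τ)) :
    HasSecondDerivAt (fun s => g (s + τ)) a t := by
  obtain ⟨g', hg, hg'⟩ := hg
  refine ⟨fun s => g' (s + τ), ?_, hg'.comp_add_const t τ⟩
  have hc : Filter.Tendsto (fun s : ℝ => s + τ) (nhds t) (nhds (t + τ)) :=
    (continuous_add_const τ).tendsto t
  filter_upwards [hc.eventually hg] with s hs using hs.comp_add_const s τ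

lemma congr {g k : ℝ → ℝ} {a t : ℝ} (hg : HasSecondDerivAt g a t)
    (h : k =ᶠ[nhds t] g) : HasSecondDerivAt k a t := by
  obtain ⟨g', hg, hg'⟩ := hg
  refine ⟨g', ?_, hg'⟩
  filter_upwards [hg, h.eventuallyEq_nhds] with s h1 h2 using h1.congr_of_eventuallyEq h2

/-- Necessary second-order condition at a local minimum. -/
lemma nonneg_of_isLocalMin {g : ℝ → ℝ} {a t : ℝ} (hg : HasSecondDerivAt g a t)
    (hmin : IsLocalMin g t) : 0 ≤ a := by
  obtain ⟨g', hg, hg'⟩ := hg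
  by_contra! hneg
  have hd : deriv g =ᶠ[nhds t] g' := by
    filter_upwards [hg] with s hs using hs.deriv
  have hdd : deriv (deriv g) t = a := by rw [hd.deriv_eq, hg'.deriv]
  have hmax : IsLocalMax g t :=
    isLocalMax_of_deriv_deriv_neg (by rw [hdd]; exact hneg) hmin.deriv_eq_zero
      hg.self_of_nhds.continuousAt
  have hconst : g =ᶠ[nhds t] fun _ => g t := by
    filter_upwards [hmin, hmax] with s h1 h2 using le_antisymm h2 h1
  have h0 : deriv (deriv g) t = 0 := by
    rw [hconst.deriv.deriv_eq]; simp
  linarith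

lemma inv_sq_add {c q k t : ℝ} (h : 0 < (t - q) ^ 2 + k) :
    HasSecondDerivAt (fun s => c / ((s - q) ^ 2 + k))
      (-2 * c / ((t - q) ^ 2 + k) ^ 2 + 8 * c * (t - q) ^ 2 / ((t - q) ^ 2 + k) ^ 3) t := by
  have hb : ∀ s, HasDerivAt (fun s : ℝ => (s - q) ^ 2 + k) (2 * (s - q)) s := by
    intro s
    simpa using (((hasDerivAt_id s).sub_const q).pow 2).add_const k
  refine ⟨fun s => -(2 * c * (s - q)) / ((s - q) ^ 2 + k) ^ 2, ?_, ?_⟩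
  · have : ∀ᶠ s in nhds t, 0 < (s - q) ^ 2 + k :=
      (by fun_prop : Continuous fun s : ℝ => (s - q) ^ 2 + k).continuousAt.eventually
        (lt_mem_nhds h)
    filter_upwards [this] with s hs
    refine ((hasDerivAt_const s c).fun_div (hb s) hs.ne').congr_deriv ?_
    ring
  · have hn : HasDerivAt (fun s : ℝ => -(2 * c * (s - q))) (-(2 * c)) t := by
      simpa using (((hasDerivAt_id t).sub_const q).const_mul (2 * c)).fun_neg
    refine (hn.fun_div ((hb t).fun_pow 2) (pow_ne_zero 2 h.ne')).congr_deriv ?_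
    have := h.ne'
    field_simp
    ring

end HasSecondDerivAt

/-- The sum of the second partial derivatives of `d` exists at `z` and is nonpositive. -/
def SuperharmonicAt (d : ℝ × ℝ → ℝ) (z : ℝ × ℝ) : Prop :=
  ∃ a b, HasSecondDerivAt (fun s => d (s, z.2)) a z.1 ∧
    HasSecondDerivAt (fun s => d (z.1, s)) b z.2 ∧ a + b ≤ 0

/-- Lipschitz continuity with respect to the `ℓ¹` distance of the plane. -/
def LipschitzSum (L : ℝ) (d : ℝ × ℝ → ℝ) : Prop :=
  ∀ z w, |d z - d w| ≤ L * (|z.1 - w.1| + |z.2 - w.2|)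

lemma LipschitzSum.continuous {L : ℝ} {d : ℝ × ℝ → ℝ} (h : LipschitzSum L d) :
    Continuous d := by
  rw [continuous_iff_continuousAt]
  intro w
  rw [ContinuousAt, tendsto_iff_dist_tendsto_zero]
  have hc : Continuous fun z : ℝ × ℝ => L * (|z.1 - w.1| + |z.2 - w.2|) := by fun_prop
  have h0 := hc.tendsto w
  simp only [sub_self, abs_zero, add_zero, mul_zero] at h0
  exact squeeze_zero (fun _ => dist_nonneg) (fun z => by rw [Real.dist_eq]; exact h z w) h0

/-- A nonnegative superharmonic function lies above the barrier
`c (|z - (x, y)|⁻² - R⁻²)` on an annulus as soon as it does so on the inner circle. -/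
lemma barrier_le {d : ℝ × ℝ → ℝ} {x y r R c : ℝ} (hr : 0 < r) (hR : 0 < R) (hc : 0 < c)
    (hcont : Continuous d) (hd : ∀ z, 0 ≤ d z)
    (hsup : ∀ z : ℝ × ℝ, (z.1 - x) ^ 2 + (z.2 - y) ^ 2 ≤ R ^ 2 → SuperharmonicAt d z)
    (hin : ∀ z : ℝ × ℝ, (z.1 - x) ^ 2 + (z.2 - y) ^ 2 = r ^ 2 → c / r ^ 2 ≤ d z)
    {z : ℝ × ℝ} (hz : r ^ 2 ≤ (z.1 - x) ^ 2 + (z.2 - y) ^ 2)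
    (hz' : (z.1 - x) ^ 2 + (z.2 - y) ^ 2 ≤ R ^ 2) :
    c / ((z.1 - x) ^ 2 + (z.2 - y) ^ 2) - c / R ^ 2 ≤ d z := by
  set N : ℝ × ℝ → ℝ := fun z => (z.1 - x) ^ 2 + (z.2 - y) ^ 2 with hN
  have hNc : Continuous N := by fun_prop
  set A : Set (ℝ × ℝ) := {z | r ^ 2 ≤ N z ∧ N z ≤ R ^ 2} with hA
  have hcomp : IsCompact A := by
    have hK : IsCompact (Icc (x - R) (x + R) ×ˢ Icc (y - R) (y + R)) :=
      isCompact_Icc.prod isCompact_Icc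
    refine hK.of_isClosed_subset ?_ ?_
    · exact (isClosed_le continuous_const hNc).inter (isClosed_le hNc continuous_const)
    · rintro w ⟨-, hw⟩
      have h1 := abs_le_of_sq_le_sq' (by nlinarith [sq_nonneg (w.2 - y)] :
        (w.1 - x) ^ 2 ≤ R ^ 2) hR.le
      have h2 := abs_le_of_sq_le_sq' (by nlinarith [sq_nonneg (w.1 - x)] :
        (w.2 - y) ^ 2 ≤ R ^ 2) hR.le
      constructor <;> constructor <;> linarith [h1.1, h1.2, h2.1, h2.2]
  set w : ℝ × ℝ → ℝ := fun z => d z - c / N z with hw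
  have hpos : ∀ z ∈ A, 0 < N z := fun z hz => (by positivity : 0 < r ^ 2).trans_le hz.1
  have hwc : ContinuousOn w A :=
    hcont.continuousOn.sub (continuousOn_const.div hNc.continuousOn fun z hz => (hpos z hz).ne')
  obtain ⟨p, hpA, hp⟩ := hcomp.exists_isMinOn ⟨z, hz, hz'⟩ hwc
  have hzp : w p ≤ w z := hp (show z ∈ A from ⟨hz, hz'⟩)
  suffices h : -(c / R ^ 2) ≤ w p by
    have : w z = d z - c / N z := rfl
    linarith
  rcases hpA.1.eq_or_lt with h1 | h1
  · have := hin p h1.symm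
    have h2 : w p = d p - c / r ^ 2 := by rw [hw, h1]
    have : 0 ≤ c / R ^ 2 := by positivity
    linarith
  rcases hpA.2.eq_or_lt with h2 | h2
  · have h3 : w p = d p - c / R ^ 2 := by rw [hw, ← h2]
    linarith [hd p]
  exfalso
  have hloc : IsLocalMin w p := by
    have : ∀ᶠ z in nhds p, z ∈ A := by
      filter_upwards [hNc.continuousAt.eventually (lt_mem_nhds h1),
        hNc.continuousAt.eventually (gt_mem_nhds h2)] with z h3 h4 using ⟨h3.le, h4.le⟩
    filter_upwards [this] with z hz using hp hz
  obtain ⟨a, b, ha, hb, hab⟩ := hsup p hpA.2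
  have hNp := hpos p hpA
  have ha' := ha.sub (HasSecondDerivAt.inv_sq_add (c := c) (q := x) (k := (p.2 - y) ^ 2) hNp)
  have hb' := hb.sub (HasSecondDerivAt.inv_sq_add (c := c) (q := y) (k := (p.1 - x) ^ 2)
    (by rw [add_comm]; exact hNp))
  have hl1 : IsLocalMin (fun s => w (s, p.2)) p.1 :=
    hloc.comp_continuous (g := fun s : ℝ => (s, p.2)) (b := p.1) (by fun_prop)
  have hl2 : IsLocalMin (fun s => w (p.1, s)) p.2 :=
    hloc.comp_continuous (g := fun s : ℝ => (p.1, s)) (b := p.2) (by fun_prop)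
  have e1 := ha'.nonneg_of_isLocalMin hl1
  have e2 := hb'.nonneg_of_isLocalMin (by
    convert hl2 using 2 with s
    simp only [hw, hN]
    rw [add_comm ((s - y) ^ 2)])
  rw [add_comm ((p.2 - y) ^ 2)] at e2
  change 0 < (p.1 - x) ^ 2 + (p.2 - y) ^ 2 at hNp
  have e3 : (-2 * c / ((p.1 - x) ^ 2 + (p.2 - y) ^ 2) ^ 2 +
      8 * c * (p.1 - x) ^ 2 / ((p.1 - x) ^ 2 + (p.2 - y) ^ 2) ^ 3) +
      (-2 * c / ((p.1 - x) ^ 2 + (p.2 - y) ^ 2) ^ 2 +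
      8 * c * (p.2 - y) ^ 2 / ((p.1 - x) ^ 2 + (p.2 - y) ^ 2) ^ 3) =
      4 * c / ((p.1 - x) ^ 2 + (p.2 - y) ^ 2) ^ 2 := by
    have := hNp.ne'
    field_simp
    ring
  have e4 : 0 < 4 * c / ((p.1 - x) ^ 2 + (p.2 - y) ^ 2) ^ 2 := by positivity
  linarith

/-- One step of a Harnack chain, in quantitative form. -/
lemma harnack_step {L R m : ℝ} (hL : 0 < L) (hR : 0 < R) (hm : 0 < m) :
    ∃ δ > 0, ∀ (d : ℝ × ℝ → ℝ) (x y y' : ℝ), LipschitzSum L d → (∀ z, 0 ≤ d z) →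
      (∀ z : ℝ × ℝ, (z.1 - x) ^ 2 + (z.2 - y) ^ 2 ≤ R ^ 2 → SuperharmonicAt d z) →
      |y - y'| ≤ R / 2 → m ≤ d (x, y) → δ ≤ d (x, y') := by
  set r := min (m / (4 * L)) (R / 4) with hr
  have hr0 : 0 < r := by positivity
  have hrL : L * (r + r) ≤ m / 2 := by
    have : r ≤ m / (4 * L) := min_le_left _ _
    rw [le_div_iff₀ (by positivity)] at this
    linarith
  have hrR : r ≤ R / 4 := min_le_right _ _
  have hsq : r ^ 2 ≤ R ^ 2 / 16 := by nlinarith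
  set c := m / 2 * r ^ 2 with hc
  refine ⟨3 * c / R ^ 2, by positivity, fun d x y y' hLip hd hsup hyy hmd => ?_⟩
  have hnear : ∀ z : ℝ × ℝ, (z.1 - x) ^ 2 + (z.2 - y) ^ 2 ≤ r ^ 2 → m / 2 ≤ d z := by
    intro z hz
    have h1 : |z.1 - x| ≤ r := abs_le_of_sq_le_sq (by nlinarith [sq_nonneg (z.2 - y)]) hr0.le
    have h2 : |z.2 - y| ≤ r := abs_le_of_sq_le_sq (by nlinarith [sq_nonneg (z.1 - x)]) hr0.le
    have h3 := hLip z (x, y)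
    have h4 : L * (|z.1 - x| + |z.2 - y|) ≤ L * (r + r) := by gcongr
    have := (abs_le.1 h3).1
    simp only at this
    linarith
  rcases le_total ((y' - y) ^ 2) (r ^ 2) with h | h
  · have h1 := hnear (x, y') (by simpa using h)
    refine le_trans ?_ h1
    rw [div_le_iff₀ (by positivity)]
    nlinarith
  · have hy : (y' - y) ^ 2 ≤ R ^ 2 / 4 := by
      have := sq_le_sq' (by linarith [abs_nonneg (y - y')]) hyy
      rw [sq_abs] at this
      nlinarith
    have h1 := barrier_le (c := c) hr0 hR (by positivity) hLip.continuous hd hsup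
      (fun z hz => by
        have := hnear z hz.le
        rwa [hc, mul_div_assoc, div_self (by positivity), mul_one])
      (z := (x, y')) (by simpa using h) (by simp only [sub_self]; nlinarith)
    refine le_trans ?_ h1
    simp only [sub_self]
    have hpos : 0 < (y' - y) ^ 2 := lt_of_lt_of_le (by positivity) h
    have h2 : c / (R ^ 2 / 4) ≤ c / (0 ^ 2 + (y' - y) ^ 2) := by
      apply div_le_div_of_nonneg_left (by positivity) (by positivity)
      linarith
    have h3 : c / (R ^ 2 / 4) = 4 * c / R ^ 2 := by field_simp
    have h4 : 4 * c / R ^ 2 - c / R ^ 2 = 3 * c / R ^ 2 := by ring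
    linarith

/-- Harnack chain along a vertical segment. -/
lemma harnack_chain {L R : ℝ} (hL : 0 < L) (hR : 0 < R) (N : ℕ) :
    ∀ m > 0, ∃ δ > 0, ∀ (d : ℝ × ℝ → ℝ) (x y y' : ℝ), LipschitzSum L d → (∀ z, 0 ≤ d z) →
      (∀ t ∈ uIcc y y', ∀ z : ℝ × ℝ, (z.1 - x) ^ 2 + (z.2 - t) ^ 2 ≤ R ^ 2 →
        SuperharmonicAt d z) →
      |y - y'| ≤ N * (R / 2) → m ≤ d (x, y) → δ ≤ d (x, y') := by
  induction N with
  | zero =>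
    intro m hm
    refine ⟨m, hm, fun d x y y' _ _ _ hyy hmd => ?_⟩
    simp only [Nat.cast_zero, zero_mul, abs_nonpos_iff, sub_eq_zero] at hyy
    rwa [← hyy]
  | succ N ih =>
    intro m hm
    obtain ⟨δ₁, hδ₁, h1⟩ := harnack_step hL hR hm
    obtain ⟨δ, hδ, h2⟩ := ih δ₁ hδ₁
    refine ⟨δ, hδ, fun d x y y' hLip hd hsup hyy hmd => ?_⟩
    have hN : (0 : ℝ) < N + 1 := by positivity
    push_cast at hyy
    set θ : ℝ := 1 / (N + 1) with hθ
    have hθ0 : 0 ≤ θ := by positivity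
    have hθ1 : θ ≤ 1 := by
      rw [hθ, div_le_one hN]; linarith [(Nat.cast_nonneg N : (0 : ℝ) ≤ N)]
    have hθN : θ * (N + 1) = 1 := by rw [hθ]; field_simp
    set s := y + θ * (y' - y) with hs
    have hmem : s ∈ uIcc y y' := by
      rw [mem_uIcc]
      rcases le_total y y' with h | h
      · left; constructor <;> nlinarith
      · right; constructor <;> nlinarith
    have hs1 : |y - s| ≤ R / 2 := by
      have : y - s = θ * (y - y') := by rw [hs]; ring
      rw [this, abs_mul, abs_of_nonneg hθ0]
      calc θ * |y - y'| ≤ θ * ((N + 1) * (R / 2)) := by gcongr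
        _ = (θ * (N + 1)) * (R / 2) := by ring
        _ = R / 2 := by rw [hθN, one_mul]
    have hs2 : |s - y'| ≤ N * (R / 2) := by
      have : s - y' = (θ * N) * (y - y') := by
        rw [hs]; linear_combination (y' - y) * hθN
      rw [this, abs_mul, abs_of_nonneg (by positivity)]
      calc θ * N * |y - y'| ≤ θ * N * ((N + 1) * (R / 2)) := by gcongr
        _ = (θ * (N + 1)) * (N * (R / 2)) := by ring
        _ = N * (R / 2) := by rw [hθN, one_mul]
    refine h2 d x s y' hLip hd (fun t ht => hsup t ?_) hs2
      (h1 d x y s hLip hd (hsup y left_mem_uIcc) hs1 hmd)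
    exact uIcc_subset_uIcc hmem right_mem_uIcc ht

/-- Harnack chain along a vertical segment in the region between two Lipschitz graphs. -/
lemma strip_harnack {L ρ H g m : ℝ} (hL : 0 < L) (hρ : 0 < ρ) (hH : 0 ≤ H) (hm : 0 < m) :
    ∃ δ > 0, ∀ (d : ℝ × ℝ → ℝ) (k₀ k₁ : ℝ → ℝ) (x y y' : ℝ),
      LipschitzSum L d → (∀ z, 0 ≤ d z) →
      (∀ s t, |k₀ s - k₀ t| ≤ H * |s - t|) → (∀ s t, |k₁ s - k₁ t| ≤ H * |s - t|) →
      (∀ z : ℝ × ℝ, k₀ z.1 < z.2 → z.2 < k₁ z.1 → SuperharmonicAt d z) →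
      y ∈ Icc (k₀ x + ρ) (k₁ x - ρ) → y' ∈ Icc (k₀ x + ρ) (k₁ x - ρ) →
      |y - y'| ≤ g → m ≤ d (x, y) → δ ≤ d (x, y') := by
  set R := ρ / (2 + H) with hRdef
  have hR : 0 < R := by positivity
  have hRρ : R * (2 + H) = ρ := by rw [hRdef]; field_simp
  obtain ⟨N, hN⟩ := exists_nat_ge (g / (R / 2))
  rw [div_le_iff₀ (by positivity)] at hN
  obtain ⟨δ, hδ, h⟩ := harnack_chain hL hR N m hm
  refine ⟨δ, hδ, fun d k₀ k₁ x y y' hLip hd hk₀ hk₁ hsup hy hy' hg hmd => ?_⟩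
  refine h d x y y' hLip hd (fun t ht z hz => ?_) (hg.trans hN) hmd
  have ht' : t ∈ Icc (k₀ x + ρ) (k₁ x - ρ) := uIcc_subset_Icc hy hy' ht
  have h1 : |z.1 - x| ≤ R := abs_le_of_sq_le_sq (by nlinarith [sq_nonneg (z.2 - t)]) hR.le
  have h2 : |z.2 - t| ≤ R := abs_le_of_sq_le_sq (by nlinarith [sq_nonneg (z.1 - x)]) hR.le
  have h3 : H * |z.1 - x| ≤ H * R := by gcongr
  have h4 := abs_le.1 (hk₀ z.1 x)
  have h5 := abs_le.1 (hk₁ z.1 x)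
  have h6 := abs_le.1 h2
  apply hsup
  · nlinarith [ht'.1, h4.2, h6.1]
  · nlinarith [ht'.2, h5.1, h6.2]

/-- A solution of `Δu = f(u)` between the graphs of `h₀` and `h₁`, nondecreasing in the vertical
variable and extended by `0` below and by `Q` above. -/
structure IsStripSolution (Q L : ℝ) (f h₀ h₁ : ℝ → ℝ) (u : ℝ × ℝ → ℝ) : Prop where
  lip : LipschitzSum L u
  mono : ∀ x, Monotone fun y => u (x, y)
  below : ∀ x y, y ≤ h₀ x → u (x, y) = 0
  above : ∀ x y, h₁ x ≤ y → u (x, y) = Q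
  eqn : ∀ z : ℝ × ℝ, h₀ z.1 < z.2 → z.2 < h₁ z.1 →
    ∃ a b, HasSecondDerivAt (fun s => u (s, z.2)) a z.1 ∧
      HasSecondDerivAt (fun s => u (z.1, s)) b z.2 ∧ a + b = f (u z)

namespace IsStripSolution

variable {Q L H g₀ g₁ : ℝ} {f h₀ h₁ : ℝ → ℝ} {u v : ℝ × ℝ → ℝ}

lemma mem_Icc (hu : IsStripSolution Q L f h₀ h₁ u) (z : ℝ × ℝ) : u z ∈ Icc 0 Q := by
  constructor
  · rw [← hu.below z.1 (min (h₀ z.1) z.2) (min_le_left _ _)]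
    exact hu.mono z.1 (min_le_right _ _)
  · rw [← hu.above z.1 (max (h₁ z.1) z.2) (le_max_left _ _)]
    exact hu.mono z.1 (le_max_right _ _)

lemma vertical_lip (hu : IsStripSolution Q L f h₀ h₁ u) (x y y' : ℝ) :
    |u (x, y) - u (x, y')| ≤ L * |y - y'| := by
  simpa using hu.lip (x, y) (x, y')

lemma lip_shift_sub (hu : IsStripSolution Q L f h₀ h₁ u) (hv : IsStripSolution Q L f h₀ h₁ v)
    (τ : ℝ) : LipschitzSum (2 * L) fun z => u (z.1, z.2 + τ) - v z := by
  intro z w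
  have h1 := hu.lip (z.1, z.2 + τ) (w.1, w.2 + τ)
  have h2 := hv.lip z w
  simp only [add_sub_add_right_eq_sub] at h1
  rw [abs_le] at *
  constructor <;> linarith [h1.1, h1.2, h2.1, h2.2]

lemma superharmonicAt_shift_sub (hf : AntitoneOn f (Icc 0 Q))
    (hu : IsStripSolution Q L f h₀ h₁ u) (hv : IsStripSolution Q L f h₀ h₁ v)
    {τ : ℝ} (hτ : 0 ≤ τ) (hle : ∀ z : ℝ × ℝ, v z ≤ u (z.1, z.2 + τ))
    {z : ℝ × ℝ} (hz₀ : h₀ z.1 < z.2) (hz₁ : z.2 < h₁ z.1 - τ) :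
    SuperharmonicAt (fun z => u (z.1, z.2 + τ) - v z) z := by
  obtain ⟨a, b, ha, hb, hab⟩ := hu.eqn (z.1, z.2 + τ) (by simp only; linarith)
    (by simp only; linarith)
  obtain ⟨a', b', ha', hb', hab'⟩ := hv.eqn z hz₀ (by linarith)
  refine ⟨a - a', b - b', ha.sub ha', hb.comp_add_const.sub hb', ?_⟩
  have := hf (hv.mem_Icc z) (hu.mem_Icc (z.1, z.2 + τ)) (hle z)
  linarith

/-- Somewhere on a partition of a vertical segment the increment of `u` is not small. -/
lemma exists_increment_ge (hQ : 0 < Q) (hu : IsStripSolution Q L f h₀ h₁ u)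
    (n : ℕ) (x ε : ℝ) (hε : 0 ≤ ε) (hw : (n + 3) * ε = h₁ x - h₀ x) (hLε : 4 * (L * ε) ≤ Q) :
    ∃ k : ℕ, k ≤ n ∧ Q / (2 * (n + 3)) ≤
      u (x, h₀ x + (k + 1) * ε + ε) - u (x, h₀ x + (k + 1) * ε) := by
  by_contra! hcon
  set m := Q / (2 * ((n : ℝ) + 3)) with hm
  have hmN : m * (2 * (n + 3)) = Q := by rw [hm]; field_simp
  have hm0 : 0 < m := by positivity
  have key : ∀ k : ℕ, k ≤ n + 1 → u (x, h₀ x + (k + 1) * ε) ≤ u (x, h₀ x + ε) + k * m := by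
    intro k
    induction k with
    | zero => simp
    | succ k ih =>
      intro hk
      have h1 := ih (by omega)
      have h2 := hcon k (by omega)
      have : h₀ x + ((k + 1 : ℕ) + 1) * ε = h₀ x + (k + 1) * ε + ε := by push_cast; ring
      rw [this]
      push_cast
      linarith
  have h1 := key (n + 1) le_rfl
  have h2 := hu.vertical_lip x (h₀ x + ε) (h₀ x)
  have h3 := hu.vertical_lip x (h₁ x) (h₀ x + (((n + 1 : ℕ) : ℝ) + 1) * ε)
  have e3 : h₁ x - (h₀ x + (((n + 1 : ℕ) : ℝ) + 1) * ε) = ε := by push_cast; linarith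
  rw [hu.below x _ le_rfl, add_sub_cancel_left, abs_of_nonneg hε] at h2
  rw [hu.above x _ le_rfl, e3, abs_of_nonneg hε] at h3
  have h2 := (abs_le.1 h2).2
  have h3 := (abs_le.1 h3).2
  push_cast at h1 h3
  nlinarith

/-- Uniform strict monotonicity near both boundary graphs. -/
lemma uniform_strict (hQ : 0 < Q) (hL : 0 < L) (hH : 0 ≤ H) (hg₀ : 0 < g₀)
    (hf : AntitoneOn f (Icc 0 Q))
    (hh₀ : ∀ s t, |h₀ s - h₀ t| ≤ H * |s - t|) (hh₁ : ∀ s t, |h₁ s - h₁ t| ≤ H * |s - t|)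
    (hgap₀ : ∀ x, g₀ ≤ h₁ x - h₀ x) (hgap₁ : ∀ x, h₁ x - h₀ x ≤ g₁)
    (hu : IsStripSolution Q L f h₀ h₁ u) {η : ℝ} (hη : 0 < η) :
    ∃ δ > 0, ∀ x, δ ≤ u (x, h₀ x + η) ∧ u (x, h₁ x - η) ≤ Q - δ := by
  have hg₁ : 0 < g₁ := hg₀.trans_le ((hgap₀ 0).trans (hgap₁ 0))
  obtain ⟨n, hn⟩ := exists_nat_ge (max (2 * g₁ / η) (4 * (L * g₁) / Q))
  have hn1 : 2 * g₁ ≤ n * η := (div_le_iff₀ hη).1 ((le_max_left _ _).trans hn)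
  have hn2 : 4 * (L * g₁) ≤ n * Q := (div_le_iff₀ hQ).1 ((le_max_right _ _).trans hn)
  have hN : (0 : ℝ) < n + 3 := by positivity
  obtain ⟨δ, hδ, hchain⟩ := strip_harnack (L := 2 * L) (ρ := g₀ / (n + 3)) (H := H) (g := g₁)
    (m := Q / (2 * (n + 3))) (by positivity) (by positivity) hH (by positivity)
  refine ⟨δ, hδ, fun x => ?_⟩
  set ε := (h₁ x - h₀ x) / (n + 3) with hεdef
  have hw : (n + 3) * ε = h₁ x - h₀ x := by rw [hεdef]; field_simp
  have hερ : g₀ / (n + 3) ≤ ε := by rw [hεdef]; gcongr; exact hgap₀ x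
  have hε : 0 < ε := lt_of_lt_of_le (by positivity) hερ
  have hεg : (n + 3) * ε ≤ g₁ := hw.trans_le (hgap₁ x)
  have hεη : 2 * ε ≤ η := by
    have : (n + 3) * (2 * ε) ≤ (n + 3) * η := by nlinarith
    exact le_of_mul_le_mul_left this hN
  have hLε : 4 * (L * ε) ≤ Q := by
    have : (n + 3) * (4 * (L * ε)) ≤ (n + 3) * Q := by
      have : L * ((n + 3) * ε) ≤ L * g₁ := by gcongr
      nlinarith
    exact le_of_mul_le_mul_left this hN
  obtain ⟨k, hk, hinc⟩ := hu.exists_increment_ge hQ n x ε hε.le hw hLε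
  have hk' : (k : ℝ) ≤ n := by exact_mod_cast hk
  have hle : ∀ z : ℝ × ℝ, u z ≤ u (z.1, z.2 + ε) := fun z => hu.mono z.1 (by linarith)
  have hstep : ∀ y ∈ Icc (h₀ x + ε) (h₁ x - ε - ε), δ ≤ u (x, y + ε) - u (x, y) := by
    intro y hy
    have hsub : Icc (h₀ x + ε) (h₁ x - ε - ε) ⊆
        Icc (h₀ x + g₀ / (n + 3)) (h₁ x - ε - g₀ / (n + 3)) :=
      Icc_subset_Icc (by linarith) (by linarith)
    have hyk : h₀ x + (k + 1) * ε ∈ Icc (h₀ x + ε) (h₁ x - ε - ε) := by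
      have h1 : 0 ≤ k * ε := by positivity
      have h2 : k * ε ≤ n * ε := by gcongr
      constructor <;> nlinarith
    refine hchain (fun z => u (z.1, z.2 + ε) - u z) h₀ (fun x => h₁ x - ε) x
      (h₀ x + (k + 1) * ε) y (hu.lip_shift_sub hu ε) (fun z => sub_nonneg.2 (hle z)) hh₀ ?_
      (fun z hz₀ hz₁ => superharmonicAt_shift_sub hf hu hu hε.le hle hz₀ hz₁)
      (hsub hyk) (hsub hy) ?_ hinc
    · intro s t
      simpa using hh₁ s t
    · rw [abs_le]
      have := hgap₁ x
      constructor <;> linarith [hy.1, hy.2, hyk.1, hyk.2]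
  have hwide : h₀ x + ε ≤ h₁ x - ε - ε := by
    have : 0 ≤ n * ε := by positivity
    linarith
  constructor
  · have h1 := hstep _ (left_mem_Icc.2 hwide)
    have h2 := hu.mono x (by linarith : h₀ x + ε + ε ≤ h₀ x + η)
    have h3 := (hu.mem_Icc (x, h₀ x + ε)).1
    simp only at h2
    linarith
  · have h1 := hstep _ (right_mem_Icc.2 hwide)
    have h2 := hu.mono x (by linarith : h₁ x - η ≤ h₁ x - ε - ε)
    have h3 := (hu.mem_Icc (x, h₁ x - ε - ε + ε)).2
    simp only at h2
    linarith

/-- If `v` lies below the vertical translate of `u` by `τ > 0`, then the difference is uniformly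
positive on the region where both are strictly between the boundary graphs. -/
lemma uniform_gap (hL : 0 < L) (hH : 0 ≤ H) (hf : AntitoneOn f (Icc 0 Q))
    (hh₀ : ∀ s t, |h₀ s - h₀ t| ≤ H * |s - t|) (hh₁ : ∀ s t, |h₁ s - h₁ t| ≤ H * |s - t|)
    (hgap₁ : ∀ x, h₁ x - h₀ x ≤ g₁)
    (hu : IsStripSolution Q L f h₀ h₁ u) (hv : IsStripSolution Q L f h₀ h₁ v)
    {τ : ℝ} (hτ : 0 < τ) (hle : ∀ z : ℝ × ℝ, v z ≤ u (z.1, z.2 + τ))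
    {δ : ℝ} (hδ : 0 < δ) (hδu : ∀ x, δ ≤ u (x, h₀ x + τ)) (hδv : ∀ x, v (x, h₁ x - τ) ≤ Q - δ) :
    ∃ δ' > 0, δ' ≤ δ ∧ ∀ x y, h₀ x ≤ y → y ≤ h₁ x - τ → δ' ≤ u (x, y + τ) - v (x, y) := by
  set ρ := δ / (4 * L) with hρdef
  have hρ : 0 < ρ := by positivity
  have hρL : 2 * L * ρ = δ / 2 := by rw [hρdef]; field_simp; norm_num
  obtain ⟨δ₁, hδ₁, hchain⟩ := strip_harnack (L := 2 * L) (ρ := ρ) (H := H) (g := g₁)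
    (m := δ / 2) (by positivity) hρ hH (by positivity)
  have hlip := hu.lip_shift_sub hv τ
  have hbot : ∀ x y, h₀ x ≤ y → y ≤ h₀ x + ρ → δ / 2 ≤ u (x, y + τ) - v (x, y) := by
    intro x y h1 h2
    have h3 := hlip (x, y) (x, h₀ x)
    simp only [sub_self, abs_zero, zero_add, hv.below x _ le_rfl, sub_zero] at h3
    rw [abs_of_nonneg (by linarith : 0 ≤ y - h₀ x)] at h3
    have h4 : 2 * L * (y - h₀ x) ≤ 2 * L * ρ := by gcongr; linarith
    linarith [(abs_le.1 h3).1, hδu x]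
  have htop : ∀ x y, h₁ x - τ - ρ ≤ y → y ≤ h₁ x - τ →
      δ / 2 ≤ u (x, y + τ) - v (x, y) := by
    intro x y h1 h2
    have h3 := hlip (x, y) (x, h₁ x - τ)
    simp only [sub_self, abs_zero, zero_add, sub_add_cancel, hu.above x _ le_rfl] at h3
    rw [abs_sub_comm y, abs_of_nonneg (by linarith : 0 ≤ h₁ x - τ - y)] at h3
    have h4 : 2 * L * (h₁ x - τ - y) ≤ 2 * L * ρ := by gcongr; linarith
    linarith [(abs_le.1 h3).1, hδv x]
  refine ⟨min (δ / 2) δ₁, by positivity, (min_le_left _ _).trans (by linarith),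
    fun x y h1 h2 => ?_⟩
  rcases le_total y (h₀ x + ρ) with h3 | h3
  · exact (min_le_left _ _).trans (hbot x y h1 h3)
  rcases le_total (h₁ x - τ - ρ) y with h4 | h4
  · exact (min_le_left _ _).trans (htop x y h4 h2)
  refine (min_le_right _ _).trans ?_
  refine hchain (fun z => u (z.1, z.2 + τ) - v z) h₀ (fun x => h₁ x - τ) x (h₀ x + ρ) y hlip
    (fun z => sub_nonneg.2 (hle z)) hh₀ ?_
    (fun z hz₀ hz₁ => superharmonicAt_shift_sub hf hu hv hτ.le hle hz₀ hz₁)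
    ⟨le_rfl, h3.trans h4⟩ ⟨h3, h4⟩ ?_ (hbot x _ (by linarith) le_rfl)
  · intro s t
    simpa using hh₁ s t
  · rw [abs_le]
    have := hgap₁ x
    constructor <;> linarith

/-- Comparison by sliding in the vertical direction. -/
lemma le_of_sliding (hQ : 0 < Q) (hL : 0 < L) (hH : 0 ≤ H) (hg₀ : 0 < g₀)
    (hf : AntitoneOn f (Icc 0 Q))
    (hh₀ : ∀ s t, |h₀ s - h₀ t| ≤ H * |s - t|) (hh₁ : ∀ s t, |h₁ s - h₁ t| ≤ H * |s - t|)
    (hgap₀ : ∀ x, g₀ ≤ h₁ x - h₀ x) (hgap₁ : ∀ x, h₁ x - h₀ x ≤ g₁)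
    (hu : IsStripSolution Q L f h₀ h₁ u) (hv : IsStripSolution Q L f h₀ h₁ v) (z : ℝ × ℝ) :
    v z ≤ u z := by
  set S : Set ℝ := {τ | 0 ≤ τ ∧ ∀ z : ℝ × ℝ, v z ≤ u (z.1, z.2 + τ)} with hS
  have hg₁ : 0 < g₁ := hg₀.trans_le ((hgap₀ 0).trans (hgap₁ 0))
  have hclosed : IsClosed S := by
    have hSeq : S = Ici 0 ∩ ⋂ z : ℝ × ℝ, {τ : ℝ | v z ≤ u (z.1, z.2 + τ)} := by
      ext τ; simp [hS]
    rw [hSeq]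
    refine isClosed_Ici.inter (isClosed_iInter fun z => ?_)
    have hc := hu.lip.continuous
    exact isClosed_le continuous_const (by fun_prop)
  have hne : S.Nonempty := by
    refine ⟨g₁, hg₁.le, fun z => ?_⟩
    rcases le_total z.2 (h₀ z.1) with h | h
    · rw [show v z = 0 from hv.below z.1 z.2 h]
      exact (hu.mem_Icc _).1
    · rw [hu.above z.1 (z.2 + g₁) (by linarith [hgap₁ z.1])]
      exact (hv.mem_Icc _).2
  have hbdd : BddBelow S := ⟨0, fun τ hτ => hτ.1⟩
  set τ := sInf S with hτdef
  obtain ⟨hτ0, hle⟩ : τ ∈ S := hclosed.csInf_mem hne hbdd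
  rcases hτ0.eq_or_lt with h0 | hτ
  · simpa [← h0] using hle z
  exfalso
  obtain ⟨δu, hδu, hUu⟩ := uniform_strict hQ hL hH hg₀ hf hh₀ hh₁ hgap₀ hgap₁ hu (half_pos hτ)
  obtain ⟨δv, hδv, hUv⟩ := uniform_strict hQ hL hH hg₀ hf hh₀ hh₁ hgap₀ hgap₁ hv (half_pos hτ)
  set δ := min δu δv with hδdef
  have hδ : 0 < δ := lt_min hδu hδv
  have hv' : ∀ x y, y ≤ h₁ x - τ / 2 → v (x, y) ≤ Q - δ := by
    intro x y hy
    have h1 : v (x, y) ≤ v (x, h₁ x - τ / 2) := hv.mono x hy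
    linarith [(hUv x).2, min_le_right δu δv]
  obtain ⟨δ', hδ', hδδ', hgap⟩ := uniform_gap hL hH hf hh₀ hh₁ hgap₁ hu hv hτ hle hδ
    (fun x => by
      have h1 : u (x, h₀ x + τ / 2) ≤ u (x, h₀ x + τ) := hu.mono x (by linarith)
      linarith [(hUu x).1, min_le_left δu δv])
    (fun x => hv' x _ (by linarith))
  set σ := min (τ / 2) (δ' / L) with hσdef
  have hσ : 0 < σ := by positivity
  have hσ1 : σ ≤ τ / 2 := min_le_left _ _
  have hσ2 : L * σ ≤ δ' := by
    have : σ ≤ δ' / L := min_le_right _ _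
    rw [le_div_iff₀ hL] at this
    linarith
  have hmem : τ - σ ∈ S := by
    refine ⟨by linarith, fun ⟨x, y⟩ => ?_⟩
    change v (x, y) ≤ u (x, y + (τ - σ))
    have hlip := (abs_le.1 (hu.vertical_lip x (y + (τ - σ)) (y + τ))).1
    rw [show y + (τ - σ) - (y + τ) = -σ by ring, abs_neg, abs_of_pos hσ] at hlip
    rcases le_total y (h₀ x) with h1 | h1
    · rw [hv.below x y h1]
      exact (hu.mem_Icc _).1
    rcases le_total y (h₁ x - τ) with h2 | h2
    · linarith [hgap x y h1 h2]
    rcases le_total y (h₁ x - τ / 2) with h3 | h3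
    · have h4 := hu.above x (y + τ) (by linarith)
      linarith [hv' x y h3]
    · rw [hu.above x (y + (τ - σ)) (by linarith)]
      exact (hv.mem_Icc _).2
  linarith [csInf_le hbdd hmem]

end IsStripSolution

section PartialDerivatives

variable {ψ : ℝ × ℝ → ℝ} {z : ℝ × ℝ}

lemma hasDerivAt_slice_fst (h : DifferentiableAt ℝ ψ z) :
    HasDerivAt (fun s => ψ (s, z.2)) (pd1 ψ z) z.1 :=
  h.hasFDerivAt.comp_hasDerivAt (f := fun s : ℝ => (s, z.2)) z.1
    ((hasDerivAt_id z.1).prodMk (hasDerivAt_const z.1 z.2))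

lemma hasDerivAt_slice_snd (h : DifferentiableAt ℝ ψ z) :
    HasDerivAt (fun s => ψ (z.1, s)) (pd2 ψ z) z.2 :=
  h.hasFDerivAt.comp_hasDerivAt (f := fun s : ℝ => (z.1, s)) z.2
    ((hasDerivAt_const z.2 z.1).prodMk (hasDerivAt_id z.2))

lemma differentiableAt_fderiv_apply (h : ContDiffAt ℝ 2 ψ z) (e : ℝ × ℝ) :
    DifferentiableAt ℝ (fun w => fderiv ℝ ψ w e) z := by
  have h1 : ContDiffAt ℝ 1 (fderiv ℝ ψ) z := h.fderiv_right (by norm_num)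
  exact (h1.differentiableAt (by norm_num)).clm_apply (differentiableAt_const e)

lemma eventually_differentiableAt (h : ContDiffAt ℝ 2 ψ z) :
    ∀ᶠ w in nhds z, DifferentiableAt ℝ ψ w := by
  filter_upwards [h.eventually (by simp)] with w hw using hw.differentiableAt (by norm_num)

lemma hasSecondDerivAt_slice_fst (h : ContDiffAt ℝ 2 ψ z) :
    HasSecondDerivAt (fun s => ψ (s, z.2)) (pd1 (pd1 ψ) z) z.1 := by
  refine ⟨fun s => pd1 ψ (s, z.2), ?_,
    hasDerivAt_slice_fst (differentiableAt_fderiv_apply h (1, 0))⟩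
  have hc : ContinuousAt (fun s : ℝ => (s, z.2)) z.1 := by fun_prop
  filter_upwards [hc.eventually (eventually_differentiableAt h)] with s hs
    using hasDerivAt_slice_fst hs

lemma hasSecondDerivAt_slice_snd (h : ContDiffAt ℝ 2 ψ z) :
    HasSecondDerivAt (fun s => ψ (z.1, s)) (pd2 (pd2 ψ) z) z.2 := by
  refine ⟨fun s => pd2 ψ (z.1, s), ?_,
    hasDerivAt_slice_snd (differentiableAt_fderiv_apply h (0, 1))⟩
  have hc : ContinuousAt (fun s : ℝ => (z.1, s)) z.2 := by fun_prop
  filter_upwards [hc.eventually (eventually_differentiableAt h)] with s hs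
    using hasDerivAt_slice_snd hs

end PartialDerivatives

/-- Extension of a function on the region between two graphs, constant on vertical lines outside. -/
def verticalExtend (h₀ h₁ : ℝ → ℝ) (ψ : ℝ × ℝ → ℝ) (z : ℝ × ℝ) : ℝ :=
  ψ (z.1, max (h₀ z.1) (min (h₁ z.1) z.2))

lemma verticalExtend_eq {h₀ h₁ : ℝ → ℝ} {ψ : ℝ × ℝ → ℝ} {z : ℝ × ℝ}
    (hz₀ : h₀ z.1 ≤ z.2) (hz₁ : z.2 ≤ h₁ z.1) : verticalExtend h₀ h₁ ψ z = ψ z := by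
  rw [verticalExtend, min_eq_right hz₁, max_eq_right hz₀]

lemma mem_closure_strip {h₀ h₁ : ℝ → ℝ} (hlt : ∀ x, h₀ x < h₁ x) {x y : ℝ}
    (hy : y ∈ Icc (h₀ x) (h₁ x)) :
    (x, y) ∈ closure {z : ℝ × ℝ | h₀ z.1 < z.2 ∧ z.2 < h₁ z.1} := by
  have hc : Continuous fun t : ℝ => (x, t) := by fun_prop
  rw [← closure_Ioo (hlt x).ne] at hy
  exact map_mem_closure hc hy fun t ht => ht

lemma isStripSolution_verticalExtend {Q H : ℝ} {K : NNReal} {f h₀ h₁ : ℝ → ℝ} {ψ : ℝ × ℝ → ℝ}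
    {Ω : Set (ℝ × ℝ)} (hΩ : Ω = {z : ℝ × ℝ | h₀ z.1 < z.2 ∧ z.2 < h₁ z.1})
    (hH : 0 ≤ H) (hh₀ : ∀ s t, |h₀ s - h₀ t| ≤ H * |s - t|)
    (hh₁ : ∀ s t, |h₁ s - h₁ t| ≤ H * |s - t|) (hlt : ∀ x, h₀ x < h₁ x)
    (hC2 : ContDiffOn ℝ 2 ψ Ω) (hLip : LipschitzOnWith K ψ (closure Ω))
    (heq : ∀ z ∈ Ω, lap ψ z = f (ψ z)) (hΓ₀ : ∀ x, ψ (x, h₀ x) = 0)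
    (hΓ₁ : ∀ x, ψ (x, h₁ x) = Q) (hmono : ∀ z ∈ Ω, 0 ≤ pd2 ψ z) {L : ℝ}
    (hL : K * (1 + H) ≤ L) :
    IsStripSolution Q L f h₀ h₁ (verticalExtend h₀ h₁ ψ) := by
  have hc₀ : Continuous h₀ :=
    (LipschitzWith.of_dist_le_mul (K := ⟨H, hH⟩) fun s t => hh₀ s t).continuous
  have hc₁ : Continuous h₁ :=
    (LipschitzWith.of_dist_le_mul (K := ⟨H, hH⟩) fun s t => hh₁ s t).continuous
  have hopen : IsOpen Ω := by
    rw [hΩ]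
    exact (isOpen_lt (hc₀.comp continuous_fst) continuous_snd).inter
      (isOpen_lt continuous_snd (hc₁.comp continuous_fst))
  have hcl : ∀ {x y}, y ∈ Icc (h₀ x) (h₁ x) → (x, y) ∈ closure Ω := by
    intro x y hy
    rw [hΩ]
    exact mem_closure_strip hlt hy
  have hclamp : ∀ x y, max (h₀ x) (min (h₁ x) y) ∈ Icc (h₀ x) (h₁ x) := fun x y =>
    ⟨le_max_left _ _, max_le (hlt x).le (min_le_left _ _)⟩
  have hat : ∀ {z}, z ∈ Ω → ContDiffAt ℝ 2 ψ z := fun hz => hC2.contDiffAt (hopen.mem_nhds hz)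
  have hmonoOn : ∀ x, MonotoneOn (fun y => ψ (x, y)) (Icc (h₀ x) (h₁ x)) := by
    intro x
    have hd : ∀ y ∈ Ioo (h₀ x) (h₁ x), HasDerivAt (fun y => ψ (x, y)) (pd2 ψ (x, y)) y := by
      intro y hy
      have hm : (x, y) ∈ Ω := by rw [hΩ]; exact hy
      exact hasDerivAt_slice_snd ((hat hm).differentiableAt (by norm_num))
    refine monotoneOn_of_deriv_nonneg (convex_Icc _ _) ?_ ?_ ?_
    · exact hLip.continuousOn.comp (by fun_prop) fun y hy => hcl hy
    · rw [interior_Icc]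
      exact fun y hy => (hd y hy).differentiableAt.differentiableWithinAt
    · rw [interior_Icc]
      intro y hy
      rw [(hd y hy).deriv]
      exact hmono _ (by rw [hΩ]; exact hy)
  refine ⟨?_, ?_, ?_, ?_, ?_⟩
  · intro z w
    have h1 := hLip.dist_le_mul _ (hcl (hclamp z.1 z.2)) _ (hcl (hclamp w.1 w.2))
    rw [Real.dist_eq] at h1
    refine h1.trans ?_
    have h2 : |max (h₀ z.1) (min (h₁ z.1) z.2) - max (h₀ w.1) (min (h₁ w.1) w.2)| ≤
        H * |z.1 - w.1| + |z.2 - w.2| := by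
      have e1 := hh₀ z.1 w.1
      have e2 := hh₁ z.1 w.1
      have e3 : 0 ≤ H * |z.1 - w.1| := by positivity
      refine (abs_max_sub_max_le_max _ _ _ _).trans (max_le (by linarith [abs_nonneg (z.2 - w.2)])
        ((abs_min_sub_min_le_max _ _ _ _).trans (max_le ?_ ?_)))
      · linarith [abs_nonneg (z.2 - w.2)]
      · linarith
    have h3 : dist (z.1, max (h₀ z.1) (min (h₁ z.1) z.2)) (w.1, max (h₀ w.1) (min (h₁ w.1) w.2)) ≤
        (1 + H) * (|z.1 - w.1| + |z.2 - w.2|) := by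
      rw [Prod.dist_eq, Real.dist_eq, Real.dist_eq]
      have e1 : 0 ≤ H * |z.1 - w.1| := by positivity
      have e2 : 0 ≤ H * |z.2 - w.2| := by positivity
      apply max_le <;> nlinarith [abs_nonneg (z.1 - w.1), abs_nonneg (z.2 - w.2)]
    calc _ ≤ K * ((1 + H) * (|z.1 - w.1| + |z.2 - w.2|)) := by gcongr
      _ = K * (1 + H) * (|z.1 - w.1| + |z.2 - w.2|) := by ring
      _ ≤ L * (|z.1 - w.1| + |z.2 - w.2|) := by gcongr
  · intro x y y' hy
    exact hmonoOn x (hclamp x y) (hclamp x y')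
      (max_le_max le_rfl (min_le_min le_rfl hy))
  · intro x y hy
    rw [verticalExtend]
    simp only
    rw [max_eq_left ((min_le_right _ _).trans hy), hΓ₀]
  · intro x y hy
    rw [verticalExtend]
    simp only
    rw [min_eq_left hy, max_eq_right (hlt x).le, hΓ₁]
  · intro z hz₀ hz₁
    have hm : z ∈ Ω := by rw [hΩ]; exact ⟨hz₀, hz₁⟩
    have hev : verticalExtend h₀ h₁ ψ =ᶠ[nhds z] ψ := by
      filter_upwards [hopen.mem_nhds hm] with w hw
      rw [hΩ] at hw
      exact verticalExtend_eq hw.1.le hw.2.le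
    have hp1 : ContinuousAt (fun s : ℝ => (s, z.2)) z.1 := by fun_prop
    have hp2 : ContinuousAt (fun s : ℝ => (z.1, s)) z.2 := by fun_prop
    refine ⟨_, _, (hasSecondDerivAt_slice_fst (hat hm)).congr (hp1.eventually hev),
      (hasSecondDerivAt_slice_snd (hat hm)).congr (hp2.eventually hev), ?_⟩
    rw [verticalExtend_eq hz₀.le hz₁.le]
    exact heq z hm

lemma antitoneOn_of_inverse_cubic {Q : ℝ} (hQ : 0 < Q) {κ f : ℝ → ℝ}
    (hκ : ∀ t ∈ Icc (0 : ℝ) 1, κ (Q * (3 * t ^ 2 - 2 * t ^ 3)) = t)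
    (hf : ∀ s, f s = 6 * Q * (1 - 2 * κ s)) : AntitoneOn f (Icc 0 Q) := by
  have hsurj : ∀ s ∈ Icc 0 Q, ∃ t ∈ Icc (0 : ℝ) 1, Q * (3 * t ^ 2 - 2 * t ^ 3) = s := by
    intro s hs
    have := intermediate_value_Icc (zero_le_one' ℝ)
      (f := fun t : ℝ => Q * (3 * t ^ 2 - 2 * t ^ 3)) (by fun_prop)
    exact this (by norm_num; exact hs)
  intro s hs s' hs' hss
  obtain ⟨t, ht, rfl⟩ := hsurj s hs
  obtain ⟨t', ht', rfl⟩ := hsurj s' hs'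
  rw [hf, hf, hκ t ht, hκ t' ht']
  have hle : t ≤ t' := by
    by_contra! hlt
    have h1 := le_of_mul_le_mul_left hss hQ
    obtain ⟨h2, h3⟩ := ht
    obtain ⟨h4, h5⟩ := ht'
    have h6 : 0 < 3 * (t + t') - 2 * (t ^ 2 + t * t' + t' ^ 2) := by
      nlinarith [mul_nonneg h2 h4, mul_nonneg h4 (sub_nonneg.2 h3),
        mul_nonneg h2 (sub_nonneg.2 h3), mul_nonneg h4 (sub_nonneg.2 h5),
        mul_nonneg h2 (sub_nonneg.2 h5)]
    nlinarith [mul_pos (sub_pos.2 hlt) h6]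
  nlinarith

/-- A `C²` function of one variable that is constant outside a bounded interval is Lipschitz. -/
lemma exists_lipschitz_of_const_outside {h : ℝ → ℝ} (hh : ContDiff ℝ 2 h) {l r c d : ℝ}
    (hlr : l ≤ r) (hl : ∀ x ≤ l, h x = c) (hr : ∀ x ≥ r, h x = d) :
    ∃ H, 0 ≤ H ∧ ∀ s t, |h s - h t| ≤ H * |s - t| := by
  obtain ⟨K, hK⟩ := hh.contDiffOn.exists_lipschitzOnWith (s := Icc l r) (by norm_num)
    (convex_Icc l r) isCompact_Icc
  refine ⟨K, K.2, fun s t => ?_⟩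
  have hproj : ∀ x, h x = h (projIcc l r hlr x) := by
    intro x
    rcases le_total x l with h1 | h1
    · rw [projIcc_of_le_left hlr h1, hl x h1, hl l le_rfl]
    rcases le_total r x with h2 | h2
    · rw [projIcc_of_right_le hlr h2, hr x h2, hr r le_rfl]
    · rw [projIcc_of_mem hlr ⟨h1, h2⟩]
  rw [hproj s, hproj t, ← Real.dist_eq]
  refine (hK.dist_le_mul _ (projIcc l r hlr s).2 _ (projIcc l r hlr t).2).trans ?_
  have := (LipschitzWith.projIcc hlr).dist_le_mul s t
  simp only [NNReal.coe_one, one_mul, Subtype.dist_eq] at this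
  rw [← Real.dist_eq]
  gcongr

lemma exists_bounds_of_const_outside {g : ℝ → ℝ} (hg : Continuous g) {l r c d : ℝ}
    (hlr : l ≤ r) (hl : ∀ x ≤ l, g x = c) (hr : ∀ x ≥ r, g x = d) (hpos : ∀ x, 0 < g x) :
    ∃ m M, 0 < m ∧ (∀ x, m ≤ g x) ∧ ∀ x, g x ≤ M := by
  have hne : (Icc l r).Nonempty := nonempty_Icc.2 hlr
  obtain ⟨p, -, hp⟩ := isCompact_Icc.exists_isMinOn hne hg.continuousOn
  obtain ⟨q, -, hq⟩ := isCompact_Icc.exists_isMaxOn hne hg.continuousOn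
  have hred : ∀ x, ∃ y ∈ Icc l r, g x = g y := by
    intro x
    rcases le_total x l with h1 | h1
    · exact ⟨l, left_mem_Icc.2 hlr, by rw [hl x h1, hl l le_rfl]⟩
    rcases le_total r x with h2 | h2
    · exact ⟨r, right_mem_Icc.2 hlr, by rw [hr x h2, hr r le_rfl]⟩
    · exact ⟨x, ⟨h1, h2⟩, rfl⟩
  refine ⟨g p, g q, hpos p, fun x => ?_, fun x => ?_⟩
  · obtain ⟨y, hy, e⟩ := hred x
    rw [e]
    exact hp hy
  · obtain ⟨y, hy, e⟩ := hred x
    rw [e]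
    exact hq hy

/-- Uniqueness: there is at most one `ψ ∈ C²(Ω)`, Lipschitz on the closure, with
`0 ≤ ψ ≤ Q`, solving `Δψ = f(ψ)` in `Ω`, `ψ = 0` on `Γ₀`, `ψ = Q` on `Γ₁`, and
`∂_{x₂}ψ ≥ 0` in `Ω`; any two such functions coincide on `Ω`. -/
theorem stmt19
    (Q α : ℝ) (hQ : 0 < Q) (hα : α ∈ Set.Ioo (0 : ℝ) 1)
    (κ : ℝ → ℝ) (hκ : ∀ t ∈ Set.Icc (0 : ℝ) 1, κ (Q * (3 * t ^ 2 - 2 * t ^ 3)) = t)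
    (f : ℝ → ℝ) (hf : ∀ s : ℝ, f s = 6 * Q * (1 - 2 * κ s))
    (h₀ h₁ : ℝ → ℝ)
    (hh₀ : ContDiff ℝ 2 h₀) (hh₁ : ContDiff ℝ 2 h₁)
    (hh₀α : ∃ C : ℝ, ∀ x y : ℝ, |deriv (deriv h₀) x - deriv (deriv h₀) y| ≤ C * |x - y| ^ α)
    (hh₁α : ∃ C : ℝ, ∀ x y : ℝ, |deriv (deriv h₁) x - deriv (deriv h₁) y| ≤ C * |x - y| ^ α)
    (hlt : ∀ x₁ : ℝ, h₀ x₁ < h₁ x₁)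
    (Lm Lp a b : ℝ) (hLm : Lm < 0) (hLp : 0 < Lp)
    (ha : 0 ≤ a) (hab : a < b) (hb : b ≤ 1)
    (hup : ∀ x₁ ≤ Lm, h₀ x₁ = 0 ∧ h₁ x₁ = 1)
    (hdown : ∀ x₁ ≥ Lp, h₀ x₁ = a ∧ h₁ x₁ = b)
    (Ω : Set (ℝ × ℝ)) (hΩ : Ω = {x : ℝ × ℝ | h₀ x.1 < x.2 ∧ x.2 < h₁ x.1})
    (ψ₁ ψ₂ : ℝ × ℝ → ℝ)
    (hC2₁ : ContDiffOn ℝ 2 ψ₁ Ω) (hC2₂ : ContDiffOn ℝ 2 ψ₂ Ω)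
    (hLip₁ : ∃ K, LipschitzOnWith K ψ₁ (closure Ω))
    (hLip₂ : ∃ K, LipschitzOnWith K ψ₂ (closure Ω))
    (hbd₁ : ∀ x ∈ Ω, 0 ≤ ψ₁ x ∧ ψ₁ x ≤ Q) (hbd₂ : ∀ x ∈ Ω, 0 ≤ ψ₂ x ∧ ψ₂ x ≤ Q)
    (heq₁ : ∀ x ∈ Ω, lap ψ₁ x = f (ψ₁ x)) (heq₂ : ∀ x ∈ Ω, lap ψ₂ x = f (ψ₂ x))
    (hΓ₀₁ : ∀ x₁ : ℝ, ψ₁ (x₁, h₀ x₁) = 0) (hΓ₀₂ : ∀ x₁ : ℝ, ψ₂ (x₁, h₀ x₁) = 0)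
    (hΓ₁₁ : ∀ x₁ : ℝ, ψ₁ (x₁, h₁ x₁) = Q) (hΓ₁₂ : ∀ x₁ : ℝ, ψ₂ (x₁, h₁ x₁) = Q)
    (hmono₁ : ∀ x ∈ Ω, 0 ≤ pd2 ψ₁ x) (hmono₂ : ∀ x ∈ Ω, 0 ≤ pd2 ψ₂ x) :
    ∀ x ∈ Ω, ψ₁ x = ψ₂ x := by
  have hlr : Lm ≤ Lp := by linarith
  obtain ⟨H₀, hH₀, hLh₀⟩ := exists_lipschitz_of_const_outside hh₀ hlr
    (fun x hx => (hup x hx).1) (fun x hx => (hdown x hx).1)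
  obtain ⟨H₁, hH₁, hLh₁⟩ := exists_lipschitz_of_const_outside hh₁ hlr
    (fun x hx => (hup x hx).2) (fun x hx => (hdown x hx).2)
  set H := max H₀ H₁ with hHdef
  have hH : 0 ≤ H := hH₀.trans (le_max_left _ _)
  replace hLh₀ : ∀ s t, |h₀ s - h₀ t| ≤ H * |s - t| := fun s t =>
    (hLh₀ s t).trans (mul_le_mul_of_nonneg_right (le_max_left _ _) (abs_nonneg _))
  replace hLh₁ : ∀ s t, |h₁ s - h₁ t| ≤ H * |s - t| := fun s t =>
    (hLh₁ s t).trans (mul_le_mul_of_nonneg_right (le_max_right _ _) (abs_nonneg _))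
  obtain ⟨g₀, g₁, hg₀, hgap₀, hgap₁⟩ := exists_bounds_of_const_outside
    (g := fun x => h₁ x - h₀ x) (hh₁.continuous.sub hh₀.continuous) hlr (c := 1 - 0) (d := b - a)
    (fun x hx => by rw [(hup x hx).1, (hup x hx).2])
    (fun x hx => by rw [(hdown x hx).1, (hdown x hx).2]) (fun x => sub_pos.2 (hlt x))
  have hanti := antitoneOn_of_inverse_cubic hQ hκ hf
  obtain ⟨K₁, hK₁⟩ := hLip₁
  obtain ⟨K₂, hK₂⟩ := hLip₂
  set L : ℝ := K₁ * (1 + H) + K₂ * (1 + H) + 1 with hLdef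
  have hk₁ : 0 ≤ K₁ * (1 + H) := by positivity
  have hk₂ : 0 ≤ K₂ * (1 + H) := by positivity
  have hL : 0 < L := by positivity
  have hu₁ := isStripSolution_verticalExtend hΩ hH hLh₀ hLh₁ hlt hC2₁ hK₁ heq₁ hΓ₀₁ hΓ₁₁ hmono₁
    (L := L) (by linarith)
  have hu₂ := isStripSolution_verticalExtend hΩ hH hLh₀ hLh₁ hlt hC2₂ hK₂ heq₂ hΓ₀₂ hΓ₁₂ hmono₂
    (L := L) (by linarith)
  intro x hx
  rw [hΩ] at hx
  rw [← verticalExtend_eq (ψ := ψ₁) hx.1.le hx.2.le, ← verticalExtend_eq (ψ := ψ₂) hx.1.le hx.2.le]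
  exact le_antisymm
    (hu₂.le_of_sliding hQ hL hH hg₀ hanti hLh₀ hLh₁ hgap₀ hgap₁ hu₁ x)
    (hu₁.le_of_sliding hQ hL hH hg₀ hanti hLh₀ hLh₁ hgap₀ hgap₁ hu₂ x)
end
end
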